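/- Let M ∈ SL(2,ℤ) with entries [[a,b],[c,d]] satisfying |a| > 2, |b| > 2, |c| > 2 and |d| > 2. Then each of the four matrices M·s_i·M⁻¹·s_j (i,j ∈ {1,2}), where s1 = [[1,0],[-1,1]] and s2 = [[1,1],[0,1]], is hyperbolic, i.e. has |trace| > 2. -/

import Mathlib

open Matrix

def s1 : Matrix.SpecialLinearGroup (Fin 2) ℤ :=
  ⟨!![1, 0; -1, 1], by norm_num [Matrix.det_fin_two_of]⟩

def s2 : Matrix.SpecialLinearGroup (Fin 2) ℤ :=
  ⟨!![1, 1; 0, 1], by norm_num [Matrix.det_fin_two_of]⟩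

theorem two_lt_abs_two_sub_sq {x : ℤ} (hx : |x| > 2) : |2 - x ^ 2| > 2 := by
  rw [gt_iff_lt, lt_abs]
  right
  nlinarith [sq_abs x]

/-- If all entries of `M ∈ SL(2,ℤ)` have absolute value `> 2`, then each of the
four matrices `M·sᵢ·M⁻¹·sⱼ` is hyperbolic, i.e. has `|trace| > 2`. -/
theorem hyperbolic_of_large_entries (M : Matrix.SpecialLinearGroup (Fin 2) ℤ)
    (a b c d : ℤ) (hM : (M : Matrix (Fin 2) (Fin 2) ℤ) = !![a, b; c, d])
    (ha : |a| > 2) (hb : |b| > 2) (hc : |c| > 2) (hd : |d| > 2) :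
    ∀ s t : Matrix.SpecialLinearGroup (Fin 2) ℤ, s ∈ ({s1, s2} : Set _) →
      t ∈ ({s1, s2} : Set _) →
      |Matrix.trace ((M * s * M⁻¹ * t : Matrix.SpecialLinearGroup (Fin 2) ℤ) :
        Matrix (Fin 2) (Fin 2) ℤ)| > 2 := by
  have hdet : a * d - b * c = 1 := by
    rw [← Matrix.det_fin_two_of a b c d, ← hM, M.det_coe]
  rintro s t (rfl | rfl) (rfl | rfl)
  · convert two_lt_abs_two_sub_sq hb using 2
    simp only [Matrix.SpecialLinearGroup.coe_mul, Matrix.SpecialLinearGroup.coe_inv, hM,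
      Matrix.adjugate_fin_two_of]
    simp [s1, Matrix.trace_fin_two]
    linear_combination 2 * hdet
  · convert two_lt_abs_two_sub_sq hd using 2
    simp only [Matrix.SpecialLinearGroup.coe_mul, Matrix.SpecialLinearGroup.coe_inv, hM,
      Matrix.adjugate_fin_two_of]
    simp [s1, s2, Matrix.trace_fin_two]
    linear_combination 2 * hdet
  · convert two_lt_abs_two_sub_sq ha using 2
    simp only [Matrix.SpecialLinearGroup.coe_mul, Matrix.SpecialLinearGroup.coe_inv, hM,
      Matrix.adjugate_fin_two_of]
    simp [s1, s2, Matrix.trace_fin_two]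
    linear_combination 2 * hdet
  · convert two_lt_abs_two_sub_sq hc using 2
    simp only [Matrix.SpecialLinearGroup.coe_mul, Matrix.SpecialLinearGroup.coe_inv, hM,
      Matrix.adjugate_fin_two_of]
    simp [s2, Matrix.trace_fin_two]
    linear_combination 2 * hdet
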